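/- arXiv:2602.21561 — 5 statements merged into one kernel-verified Lean document; each statement's English description precedes it below -/
import Mathlib

section
/- The function W̄ is differentiable on ℝ with W̄'(y) = −1/(1 + 3·W̄(y)²) for every y. In particular, −1 ≤ W̄'(y) ≤ 0 for all y, and W̄'(y) = −1 if and only if y = 0. -/
/-- The stable self-similar Burgers profile `W̄`. -/
noncomputable def Wbar (y : ℝ) : ℝ :=
  (-y / 2 + Real.sqrt (1 / 27 + y ^ 2 / 4)) ^ ((1 : ℝ) / 3) -
  (y / 2 + Real.sqrt (1 / 27 + y ^ 2 / 4)) ^ ((1 : ℝ) / 3)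

/-!
The formula for `W̄(y)` is Cardano's formula for the real root of `w ^ 3 + w + y = 0`. Thus `W̄` is
a continuous right inverse of `w ↦ -(w ^ 3 + w)`, whose derivative `-(1 + 3 * w ^ 2)` never
vanishes, and the inverse function rule gives both the differentiability and the derivative of `W̄`.
-/

theorem depressed_cubic_eq_zero_of_cube_sub_cube {R : Type*} [CommRing R] {p q a b : R}
    (hsub : a ^ 3 - b ^ 3 = -q) (hmul : 3 * (a * b) = p) :
    (a - b) ^ 3 + p * (a - b) + q = 0 := by
  linear_combination hsub - (a - b) * hmul

theorem rpow_one_third_pow_three {x : ℝ} (hx : 0 ≤ x) : (x ^ ((1 : ℝ) / 3)) ^ 3 = x := by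
  simpa only [one_div, Nat.cast_ofNat] using Real.rpow_inv_natCast_pow hx three_ne_zero

theorem cardano_real_root {p q s : ℝ} (hp : 0 ≤ p) (hs : 0 ≤ s)
    (hdisc : s ^ 2 = (p / 3) ^ 3 + (q / 2) ^ 2) :
    ((-q / 2 + s) ^ ((1 : ℝ) / 3) - (q / 2 + s) ^ ((1 : ℝ) / 3)) ^ 3 +
      p * ((-q / 2 + s) ^ ((1 : ℝ) / 3) - (q / 2 + s) ^ ((1 : ℝ) / 3)) + q = 0 := by
  have habs : |q / 2| ≤ s := by
    refine abs_le_of_sq_le_sq ?_ hs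
    rw [hdisc]
    exact le_add_of_nonneg_left (by positivity)
  obtain ⟨hlower, hupper⟩ := abs_le.mp habs
  have ha : 0 ≤ -q / 2 + s := by linarith
  have hb : 0 ≤ q / 2 + s := by linarith
  have hprod : (-q / 2 + s) * (q / 2 + s) = (p / 3) ^ 3 := by linear_combination hdisc
  have hroots : (-q / 2 + s) ^ ((1 : ℝ) / 3) * (q / 2 + s) ^ ((1 : ℝ) / 3) = p / 3 := by
    rw [← Real.mul_rpow ha hb, hprod, one_div]
    exact Real.pow_rpow_inv_natCast (by positivity) three_ne_zero
  apply depressed_cubic_eq_zero_of_cube_sub_cube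
  · rw [rpow_one_third_pow_three ha, rpow_one_third_pow_three hb]
    ring
  · rw [hroots]
    ring

theorem hasDerivAt_depressed_cubic_root {𝕜 : Type*} [NontriviallyNormedField 𝕜] {p q : 𝕜}
    {w : 𝕜 → 𝕜} (hw : ContinuousAt w q) (hsimple : p + 3 * w q ^ 2 ≠ 0)
    (hroot : ∀ᶠ t in nhds q, w t ^ 3 + p * w t + t = 0) :
    HasDerivAt w (-1 / (p + 3 * w q ^ 2)) q := by
  have hcubic : HasDerivAt (fun x ↦ -(x ^ 3 + p * x)) (-(p + 3 * w q ^ 2)) (w q) := by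
    refine ((hasDerivAt_pow 3 (w q)).add ((hasDerivAt_id (w q)).const_mul p)).neg.congr_deriv ?_
    norm_num [add_comm]
  have hinv : ∀ᶠ t in nhds q, -(w t ^ 3 + p * w t) = t :=
    hroot.mono fun t ht ↦ neg_eq_of_add_eq_zero_right ht
  refine (hcubic.of_local_left_inverse hw (neg_ne_zero.mpr hsimple) hinv).congr_deriv ?_
  rw [inv_neg, neg_div, one_div]

theorem Wbar_cubic (y : ℝ) : Wbar y ^ 3 + Wbar y + y = 0 := by
  have hdisc : Real.sqrt (1 / 27 + y ^ 2 / 4) ^ 2 = (1 / 3) ^ 3 + (y / 2) ^ 2 := by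
    rw [Real.sq_sqrt (by positivity)]
    ring
  simpa only [Wbar, one_mul] using cardano_real_root zero_le_one (Real.sqrt_nonneg _) hdisc

theorem continuous_Wbar : Continuous Wbar := by
  unfold Wbar
  refine .sub (.rpow_const ?_ ?_) (.rpow_const ?_ ?_)
  · fun_prop
  · exact fun _ ↦ .inr (by norm_num)
  · fun_prop
  · exact fun _ ↦ .inr (by norm_num)

theorem hasDerivAt_Wbar (y : ℝ) : HasDerivAt Wbar (-1 / (1 + 3 * Wbar y ^ 2)) y :=
  hasDerivAt_depressed_cubic_root continuous_Wbar.continuousAt (by positivity)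
    (.of_forall fun t ↦ by simpa only [one_mul] using Wbar_cubic t)

theorem Wbar_eq_zero_iff {y : ℝ} : Wbar y = 0 ↔ y = 0 := by
  constructor
  · intro hw
    simpa [hw] using Wbar_cubic y
  · rintro rfl
    simp [Wbar]

/-- `W̄` is differentiable with `W̄'(y) = −1/(1 + 3 W̄(y)²)`; in particular `−1 ≤ W̄' ≤ 0` and
`W̄'(y) = −1` iff `y = 0`. -/
theorem Wbar_deriv :
    Differentiable ℝ Wbar ∧
    (∀ y : ℝ, deriv Wbar y = -1 / (1 + 3 * Wbar y ^ 2)) ∧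
    (∀ y : ℝ, -1 ≤ deriv Wbar y ∧ deriv Wbar y ≤ 0) ∧
    (∀ y : ℝ, deriv Wbar y = -1 ↔ y = 0) := by
  have hderiv (y : ℝ) : deriv Wbar y = -1 / (1 + 3 * Wbar y ^ 2) := (hasDerivAt_Wbar y).deriv
  have hpos (y : ℝ) : 0 < 1 + 3 * Wbar y ^ 2 := by positivity
  refine ⟨fun y ↦ (hasDerivAt_Wbar y).differentiableAt, hderiv, fun y ↦ ⟨?_, ?_⟩, fun y ↦ ?_⟩
  · rw [hderiv, le_div_iff₀ (hpos y)]
    linarith [sq_nonneg (Wbar y)]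
  · rw [hderiv]
    exact div_nonpos_of_nonpos_of_nonneg (by norm_num) (hpos y).le
  · calc
      deriv Wbar y = -1 ↔ Wbar y = 0 := by
        rw [hderiv, div_eq_iff (hpos y).ne']
        simp
      _ ↔ y = 0 := Wbar_eq_zero_iff
end

section
/- The function W̄ solves the stationary self-similar Burgers equation: for every real number y, −(1/2)·W̄(y) + ((3/2)·y + W̄(y))·W̄'(y) = 0, where W̄' denotes the derivative of W̄. -/
/-!
Cardano's formula identifies `W̄ y` as a root `w` of the cubic `w + w³ = -y`. Differentiating this
relation gives `(1 + 3w²) w' = -1`, while the relation itself turns the transport speed into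
`3y + 2w = -w (1 + 3w²)`. Hence `(3y + 2w) w' = w`, which is twice the Burgers equation.
-/

open scoped Topology

section ImplicitProfile

variable {𝕜 : Type*} [NontriviallyNormedField 𝕜] {w : 𝕜 → 𝕜} {w' y b c : 𝕜} {n : ℕ}

lemma mul_deriv_eq_neg_one_of_add_pow_eq_neg (hw : HasDerivAt w w' y)
    (h : ∀ᶠ x in 𝓝 y, b * w x + c * w x ^ n = -x) :
    (b + c * (n * w y ^ (n - 1))) * w' = -1 := by
  have hlhs : HasDerivAt (fun x ↦ b * w x + c * w x ^ n)
      (b * w' + c * (n * w y ^ (n - 1) * w')) y :=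
    (hw.const_mul b).add ((hw.fun_pow n).const_mul c)
  have hrhs : HasDerivAt (fun x ↦ b * w x + c * w x ^ n) (-1) y :=
    (hasDerivAt_neg y).congr_of_eventuallyEq h
  linear_combination hlhs.unique hrhs

lemma selfSimilar_burgers_of_add_pow_eq_neg (hw : HasDerivAt w w' y)
    (h : ∀ᶠ x in 𝓝 y, b * w x + c * w x ^ n = -x) :
    -w y + (n * y + (n - 1) * (b * w y)) * w' = 0 := by
  have hderiv := mul_deriv_eq_neg_one_of_add_pow_eq_neg hw h
  have hpow : n * w y ^ (n - 1) * w y = n * w y ^ n := by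
    cases n <;> simp [pow_succ, mul_assoc]
  have hspeed : n * y + (n - 1) * (b * w y) = -w y * (b + c * (n * w y ^ (n - 1))) := by
    linear_combination (n : 𝕜) * h.self_of_nhds + c * hpow
  rw [hspeed]
  linear_combination -w y * hderiv

end ImplicitProfile

lemma mul_sub_add_sub_pow_three_eq_neg {R : Type*} [CommRing R] {u v p q : R}
    (hsub : u ^ 3 - v ^ 3 = -q) (hmul : 3 * (u * v) = p) :
    p * (u - v) + (u - v) ^ 3 = -q := by
  linear_combination hsub - (u - v) * hmul

lemma add_sqrt_add_sq_nonneg {c : ℝ} (hc : 0 ≤ c) (x : ℝ) : 0 ≤ x + √(c + x ^ 2) := by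
  have := neg_le_of_abs_le (Real.abs_le_sqrt (le_add_of_nonneg_left hc : x ^ 2 ≤ c + x ^ 2))
  linarith

lemma neg_add_sqrt_mul_add_sqrt {c x : ℝ} (h : 0 ≤ c + x ^ 2) :
    (-x + √(c + x ^ 2)) * (x + √(c + x ^ 2)) = c := by
  linear_combination Real.sq_sqrt h

lemma add_sqrt_add_sq_pos {c : ℝ} (hc : 0 < c) (x : ℝ) : 0 < x + √(c + x ^ 2) := by
  refine (add_sqrt_add_sq_nonneg hc.le x).lt_of_ne' fun h ↦ hc.ne' ?_
  rw [← neg_add_sqrt_mul_add_sqrt (by positivity : 0 ≤ c + x ^ 2), h, mul_zero]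

/-- Cardano's expression for the real root `t` of the depressed cubic `t ^ 3 + p * t + q = 0`.
It is meant for `0 ≤ p`, where both cube roots, encoded as real powers, have nonnegative bases. -/
noncomputable def cardanoRoot (p q : ℝ) : ℝ :=
  (-(q / 2) + √((p / 3) ^ 3 + (q / 2) ^ 2)) ^ (3⁻¹ : ℝ) -
    (q / 2 + √((p / 3) ^ 3 + (q / 2) ^ 2)) ^ (3⁻¹ : ℝ)

lemma mul_cardanoRoot_add_pow_three {p : ℝ} (hp : 0 ≤ p) (q : ℝ) :
    p * cardanoRoot p q + cardanoRoot p q ^ 3 = -q := by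
  have hc : 0 ≤ (p / 3) ^ 3 := by positivity
  have hu : 0 ≤ -(q / 2) + √((p / 3) ^ 3 + (q / 2) ^ 2) := by
    simpa only [neg_sq] using add_sqrt_add_sq_nonneg hc (-(q / 2))
  have hv := add_sqrt_add_sq_nonneg hc (q / 2)
  have cbrt_pow {x : ℝ} (hx : 0 ≤ x) : (x ^ (3⁻¹ : ℝ)) ^ 3 = x :=
    Real.rpow_inv_natCast_pow hx three_ne_zero
  apply mul_sub_add_sub_pow_three_eq_neg
  · rw [cbrt_pow hu, cbrt_pow hv]
    ring
  · have cbrt_cube : ((p / 3) ^ 3) ^ (3⁻¹ : ℝ) = p / 3 :=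
      Real.pow_rpow_inv_natCast (by positivity) three_ne_zero
    rw [← Real.mul_rpow hu hv, neg_add_sqrt_mul_add_sqrt (by positivity), cbrt_cube]
    ring

lemma differentiable_cardanoRoot {p : ℝ} (hp : 0 < p) : Differentiable ℝ (cardanoRoot p) := by
  have hc : 0 < (p / 3) ^ 3 := by positivity
  have hsqrt : Differentiable ℝ fun q : ℝ ↦ √((p / 3) ^ 3 + (q / 2) ^ 2) :=
    Differentiable.sqrt (by fun_prop) fun q ↦ by positivity
  have hu (q : ℝ) : -(q / 2) + √((p / 3) ^ 3 + (q / 2) ^ 2) ≠ 0 := by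
    simpa only [neg_sq] using (add_sqrt_add_sq_pos hc (-(q / 2))).ne'
  have hv (q : ℝ) : q / 2 + √((p / 3) ^ 3 + (q / 2) ^ 2) ≠ 0 :=
    (add_sqrt_add_sq_pos hc (q / 2)).ne'
  exact (Differentiable.rpow_const (by fun_prop) fun q ↦ .inl (hu q)).sub
    (Differentiable.rpow_const (by fun_prop) fun q ↦ .inl (hv q))

lemma Wbar_eq_cardanoRoot : Wbar = cardanoRoot 1 := by
  ext y
  have hdisc : (1 / 3 : ℝ) ^ 3 + (y / 2) ^ 2 = 1 / 27 + y ^ 2 / 4 := by ring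
  rw [Wbar, cardanoRoot, hdisc, neg_div, one_div (3 : ℝ)]

/-- `W̄` solves the stationary self-similar Burgers equation
`−(1/2) W̄(y) + ((3/2) y + W̄(y)) W̄'(y) = 0`. -/
theorem Wbar_selfSimilar_burgers (y : ℝ) :
    -(1 / 2) * Wbar y + ((3 / 2) * y + Wbar y) * deriv Wbar y = 0 := by
  have hcubic (x : ℝ) : 1 * Wbar x + 1 * Wbar x ^ 3 = -x := by
    simpa only [Wbar_eq_cardanoRoot, one_mul] using mul_cardanoRoot_add_pow_three zero_le_one x
  have hderiv : HasDerivAt Wbar (deriv Wbar y) y := by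
    rw [Wbar_eq_cardanoRoot]
    exact (differentiable_cardanoRoot one_pos y).hasDerivAt
  have hburgers := selfSimilar_burgers_of_add_pow_eq_neg hderiv (.of_forall hcubic)
  push_cast at hburgers
  linear_combination hburgers / 2
end

section
/- The function W̄ is infinitely differentiable on ℝ, and its derivatives at the origin satisfy: W̄(0) = 0, W̄'(0) = −1, W̄''(0) = 0, W̄'''(0) = 6, and the iterated derivative of order 2k of W̄ vanishes at 0 for every natural number k (i.e., W̄^{(2k)}(0) = 0 for all k ≥ 0). -/
/-!
Cardano's formula shows that `W̄` solves the cubic `w ^ 3 + w = -y`. Differentiating this equation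
implicitly gives the autonomous equation `w' = -1 / (1 + 3 * w ^ 2)`, and repeated use of the chain
rule then expresses every derivative of `w` as a rational function of `w`. The even derivatives
vanish at the origin because `W̄` is odd.
-/

section OddFunction

variable {𝕜 F : Type*} [NontriviallyNormedField 𝕜] [NormedAddCommGroup F] [NormedSpace 𝕜 F]
  [IsAddTorsionFree F] {f : 𝕜 → F} {n : ℕ}

theorem iteratedDeriv_zero_of_odd_of_even (hf : f.Odd) (hn : Even n) :
    iteratedDeriv n f 0 = 0 := by
  have hneg : -iteratedDeriv n f 0 = iteratedDeriv n f 0 := by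
    calc
      -iteratedDeriv n f 0 = iteratedDeriv n (fun x => f (-x)) 0 := by
        rw [← iteratedDeriv_neg]
        exact congrArg (iteratedDeriv n · 0) (funext fun x => (hf x).symm)
      _ = iteratedDeriv n f 0 := by
        rw [iteratedDeriv_comp_neg, hn.neg_one_pow, one_smul, neg_zero]
  exact neg_eq_self.mp hneg

end OddFunction

section Radicals

theorem add_sqrt_pos_of_sq_lt {t c : ℝ} (h : t ^ 2 < c) : 0 < t + √c := by
  linarith [Real.neg_sqrt_lt_of_sq_lt h]

theorem contDiff_add_sqrt_rpow {E : Type*} [NormedAddCommGroup E] [NormedSpace ℝ E]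
    {n : WithTop ℕ∞} {t c : E → ℝ} (ht : ContDiff ℝ n t) (hc : ContDiff ℝ n c)
    (h : ∀ x, t x ^ 2 < c x) (r : ℝ) : ContDiff ℝ n fun x => (t x + √(c x)) ^ r :=
  (ht.add (hc.sqrt fun x => ((sq_nonneg (t x)).trans_lt (h x)).ne')).rpow_const_of_ne
    fun x => (add_sqrt_pos_of_sq_lt (h x)).ne'

theorem cube_sub_rpow_one_third {a b : ℝ} (ha : 0 ≤ a) (hb : 0 ≤ b) :
    (a ^ (1 / 3 : ℝ) - b ^ (1 / 3 : ℝ)) ^ 3 +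
      3 * (a * b) ^ (1 / 3 : ℝ) * (a ^ (1 / 3 : ℝ) - b ^ (1 / 3 : ℝ)) = a - b := by
  have cube_root {x : ℝ} (hx : 0 ≤ x) : (x ^ (1 / 3 : ℝ)) ^ 3 = x := by
    simpa using Real.rpow_inv_natCast_pow hx three_ne_zero
  rw [Real.mul_rpow ha hb]
  linear_combination cube_root ha - cube_root hb

end Radicals

section DepressedCubic

variable {p : ℝ} {w : ℝ → ℝ}

theorem lipschitzWith_of_depressed_cubic (hp : 0 < p) (hw : ∀ y, w y ^ 3 + p * w y = -y) :
    LipschitzWith (Real.toNNReal p⁻¹) w := by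
  refine LipschitzWith.of_dist_le' fun y z => ?_
  rw [Real.dist_eq, Real.dist_eq, inv_mul_eq_div, le_div_iff₀ hp]
  have hfactor : y - z = -((w y - w z) * (p + (w y ^ 2 + w y * w z + w z ^ 2))) := by
    linear_combination hw y - hw z
  have hquad : 0 ≤ w y ^ 2 + w y * w z + w z ^ 2 := by
    nlinarith [sq_nonneg (w y + w z)]
  calc
    |w y - w z| * p ≤ |w y - w z| * (p + (w y ^ 2 + w y * w z + w z ^ 2)) := by
      gcongr
      exact le_add_of_nonneg_right hquad
    _ = |y - z| := by
      rw [hfactor, abs_neg, abs_mul, abs_of_pos (add_pos_of_pos_of_nonneg hp hquad)]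

theorem hasDerivAt_of_depressed_cubic (hp : 0 < p) (hw : ∀ y, w y ^ 3 + p * w y = -y) (y : ℝ) :
    HasDerivAt w (-1 / (p + 3 * w y ^ 2)) y := by
  have hcubic : HasDerivAt (fun x : ℝ => -(x ^ 3 + p * x)) (-(3 * w y ^ 2 + p)) (w y) := by
    simpa using ((hasDerivAt_pow 3 (w y)).fun_add ((hasDerivAt_id' (w y)).const_mul p)).fun_neg
  have hinv : ∀ z, -(w z ^ 3 + p * w z) = z := fun z => by rw [hw z, neg_neg]
  have hne : -(3 * w y ^ 2 + p) ≠ 0 := neg_ne_zero.mpr (by positivity)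
  have hcont : ContinuousAt w y := (lipschitzWith_of_depressed_cubic hp hw).continuous.continuousAt
  have hd := hcubic.of_local_left_inverse hcont hne (.of_forall hinv)
  rwa [inv_neg, add_comm, inv_eq_one_div, ← neg_div] at hd

theorem iteratedDeriv_two_of_depressed_cubic (hp : 0 < p) (hw : ∀ y, w y ^ 3 + p * w y = -y) :
    iteratedDeriv 2 w = fun y => -6 * w y / (p + 3 * w y ^ 2) ^ 3 := by
  have hd := hasDerivAt_of_depressed_cubic hp hw
  have hderiv : deriv w = fun y => -1 / (p + 3 * w y ^ 2) := funext fun y => (hd y).deriv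
  rw [iteratedDeriv_succ, iteratedDeriv_one, hderiv]
  funext y
  have hne : p + 3 * w y ^ 2 ≠ 0 := by positivity
  have hquot := (hasDerivAt_const y (-1 : ℝ)).fun_div
    ((((hd y).fun_pow 2).const_mul 3).const_add p) hne
  rw [hquot.deriv]
  push_cast
  field_simp
  ring

theorem iteratedDeriv_three_of_depressed_cubic (hp : 0 < p) (hw : ∀ y, w y ^ 3 + p * w y = -y) :
    iteratedDeriv 3 w = fun y => (6 * p - 90 * w y ^ 2) / (p + 3 * w y ^ 2) ^ 5 := by
  have hd := hasDerivAt_of_depressed_cubic hp hw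
  rw [iteratedDeriv_succ, iteratedDeriv_two_of_depressed_cubic hp hw]
  funext y
  have hne : p + 3 * w y ^ 2 ≠ 0 := by positivity
  have hquot := ((hd y).const_mul (-6)).fun_div
    ((((hd y).fun_pow 2).const_mul 3).const_add p |>.fun_pow 3) (pow_ne_zero 3 hne)
  rw [hquot.deriv]
  push_cast
  field_simp
  ring

end DepressedCubic

namespace Wbar

theorem sq_half_lt (y : ℝ) : (y / 2) ^ 2 < 1 / 27 + y ^ 2 / 4 := by
  linarith [div_pow y 2 2]

theorem sq_neg_half_lt (y : ℝ) : (-y / 2) ^ 2 < 1 / 27 + y ^ 2 / 4 := by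
  simpa only [neg_sq] using sq_half_lt (-y)

theorem contDiff {n : WithTop ℕ∞} : ContDiff ℝ n Wbar :=
  (contDiff_add_sqrt_rpow (by fun_prop) (by fun_prop) sq_neg_half_lt _).sub
    (contDiff_add_sqrt_rpow (by fun_prop) (by fun_prop) sq_half_lt _)

theorem odd : Wbar.Odd := fun y => by
  simp [Wbar]

theorem cubic (y : ℝ) : Wbar y ^ 3 + Wbar y = -y := by
  have ha := add_sqrt_pos_of_sq_lt (sq_neg_half_lt y)
  have hb := add_sqrt_pos_of_sq_lt (sq_half_lt y)
  have hprod : (-y / 2 + √(1 / 27 + y ^ 2 / 4)) * (y / 2 + √(1 / 27 + y ^ 2 / 4)) =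
      (1 / 3) ^ 3 := by
    linear_combination Real.sq_sqrt (show 0 ≤ 1 / 27 + y ^ 2 / 4 by positivity)
  have hroot : ((1 / 3 : ℝ) ^ 3) ^ (1 / 3 : ℝ) = 1 / 3 := by
    simpa using Real.pow_rpow_inv_natCast (show (0 : ℝ) ≤ 1 / 3 by norm_num) three_ne_zero
  have hcardano := cube_sub_rpow_one_third ha.le hb.le
  rw [hprod, hroot] at hcardano
  unfold Wbar
  linear_combination hcardano

end Wbar

/-- `W̄` is smooth, with `W̄(0) = 0`, `W̄'(0) = −1`, `W̄''(0) = 0`, `W̄'''(0) = 6`, and all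
even-order derivatives of `W̄` vanish at the origin. -/
theorem Wbar_smooth_derivs_at_zero :
    ContDiff ℝ (⊤ : ℕ∞) Wbar ∧
    Wbar 0 = 0 ∧
    deriv Wbar 0 = -1 ∧
    iteratedDeriv 2 Wbar 0 = 0 ∧
    iteratedDeriv 3 Wbar 0 = 6 ∧
    (∀ k : ℕ, iteratedDeriv (2 * k) Wbar 0 = 0) := by
  have hzero : Wbar 0 = 0 := Wbar.odd.map_zero
  have hcubic (y : ℝ) : Wbar y ^ 3 + 1 * Wbar y = -y := by rw [one_mul, Wbar.cubic]
  have hderiv : deriv Wbar 0 = -1 := by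
    simpa [hzero] using (hasDerivAt_of_depressed_cubic one_pos hcubic 0).deriv
  have hthree : iteratedDeriv 3 Wbar 0 = 6 := by
    simp [iteratedDeriv_three_of_depressed_cubic one_pos hcubic, hzero]
  have heven (k : ℕ) : iteratedDeriv (2 * k) Wbar 0 = 0 :=
    iteratedDeriv_zero_of_odd_of_even Wbar.odd (even_two_mul k)
  exact ⟨Wbar.contDiff, hzero, hderiv, heven 1, hthree, heven⟩
end

section
/- Let β* ∈ ℝ, b : ℝ → ℝ differentiable, I ⊆ ℝ an open interval, and w, z : ℝ × I → ℝ differentiable functions satisfying ∂ₜw + (w + (1/3)z)·∂ₓw = −(3/4)β*·b'(x) and ∂ₜz + ((1/3)w + z)·∂ₓz = −(3/4)β*·b'(x) on ℝ × I. Let τ, ξ, κ : I → ℝ be differentiable with τ(t) > t and τ'(t) < 1 for all t ∈ I, and set β_τ(t) = 1/(1 − τ'(t)). Then s(t) = −log(τ(t) − t) is strictly increasing on I; let t(·) be its inverse defined on J = s(I). Define W, Z, B : ℝ × J → ℝ by W(y, s) = e^{s/2}·(w(ξ(t(s)) + y·e^{−3s/2}, t(s)) − κ(t(s))), Z(y,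 s) = z(ξ(t(s)) + y·e^{−3s/2}, t(s)), and B(y, s) = b'(ξ(t(s)) + y·e^{−3s/2}). Then on ℝ × J the self-similar equations hold: ∂ₛW − (1/2)W + ((3/2)y + β_τ·W + G_W)·∂_yW = −(3/4)β*·β_τ·e^{−s/2}·B − e^{−s/2}·β_τ·κ'(t(s)), where G_W(y, s) = e^{s/2}·β_τ·(κ(t(s)) + (1/3)Z(y, s) − ξ'(t(s))), and ∂ₛZ + ((3/2)y + (1/3)β_τ·W + G_Z)·∂_yZ = −(3/4)β*·β_τ·e^{−s}·B, where G_Z(y, s) = e^{s/2}·β_τ·((1/3)κ(t(s)) + Z(y, s) − ξ'(t(s))), with β_τ evaluated at t(s). -/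
/-!
On `I` the clock `s(t) = -log (τ t - t)` satisfies `s' = (1 - τ') eˢ > 0`, so `∂ₛ = s'⁻¹ ∂ₜ` along
the curve `t ↦ (ξ t + y e^{-γ s(t)}, t)` with `y` fixed. The velocity of that curve differs from the
characteristic velocity `(c, 1)` only by a multiple of `(1, 0)`, hence any transport equation
`∂ₜf + c ∂ₓf = F` becomes, for `V(y, s) = e^{αs} f`, the self-similar transport equation
`∂ₛV - αV + (γy + β e^{(γ-1)s} (c - ξ')) ∂_yV = β e^{(α-1)s} F` with `β = 1 / (1 - τ')`. The two
equations of the system are the cases `f = w - κ`, `α = 1/2` and `f = z`, `α = 0`, with `γ = 3/2`.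
-/

open Filter Set Topology

section Inverse

variable {α β : Type*} [LinearOrder β] {f : α → β} {s : Set α} {a : α}

theorem strictMonoOn_invFunOn_image [LinearOrder α] [Nonempty α] (hf : StrictMonoOn f s) :
    StrictMonoOn (Function.invFunOn f s) (f '' s) := by
  rintro _ ⟨a, ha, rfl⟩ _ ⟨b, hb, rfl⟩ hab
  rw [hf.injOn.leftInvOn_invFunOn ha, hf.injOn.leftInvOn_invFunOn hb]
  exact (hf.lt_iff_lt ha hb).1 hab

variable [ConditionallyCompleteLinearOrder α] [TopologicalSpace α] [OrderTopology α]
  [DenselyOrdered α] [NoMinOrder α] [NoMaxOrder α] [TopologicalSpace β] [OrderTopology β]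

theorem image_mem_nhds_of_strictMonoOn (hf : StrictMonoOn f s) (hc : ContinuousOn f s)
    (hs : s ∈ 𝓝 a) : f '' s ∈ 𝓝 (f a) := by
  obtain ⟨l, u, ⟨hla, hau⟩, hlu⟩ := mem_nhds_iff_exists_Ioo_subset.1 hs
  obtain ⟨b, hlb, hba⟩ := exists_between hla
  obtain ⟨c, hac, hcu⟩ := exists_between hau
  have hbc : Icc b c ⊆ s := (Icc_subset_Ioo hlb hcu).trans hlu
  have hb : f b < f a := hf (hbc ⟨le_rfl, (hba.trans hac).le⟩) (mem_of_mem_nhds hs) hba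
  have hc' : f a < f c := hf (mem_of_mem_nhds hs) (hbc ⟨(hba.trans hac).le, le_rfl⟩) hac
  exact mem_of_superset (Icc_mem_nhds hb hc')
    ((intermediate_value_Icc (hba.trans hac).le (hc.mono hbc)).trans (image_mono hbc))

theorem continuousAt_invFunOn_of_strictMonoOn [Nonempty α] (hf : StrictMonoOn f s)
    (hc : ContinuousOn f s) (hs : s ∈ 𝓝 a) : ContinuousAt (Function.invFunOn f s) (f a) := by
  have hinv : LeftInvOn (Function.invFunOn f s) f s := hf.injOn.leftInvOn_invFunOn
  refine (strictMonoOn_invFunOn_image hf).continuousAt_of_image_mem_nhds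
    (image_mem_nhds_of_strictMonoOn hf hc hs) ?_
  rwa [hinv.image_image, hinv (mem_of_mem_nhds hs)]

end Inverse

section Calculus

theorem hasDerivAt_of_comp_strictMonoOn {E : Type*} [NormedAddCommGroup E] [NormedSpace ℝ E]
    {σ : ℝ → ℝ} {U : ℝ → E} {I : Set ℝ} {t σ' : ℝ} {U' : E} (hmono : StrictMonoOn σ I)
    (hcont : ContinuousOn σ I) (hI : I ∈ 𝓝 t) (hσ : HasDerivAt σ σ' t) (hσ' : σ' ≠ 0)
    (hU : HasDerivAt (U ∘ σ) U' t) : HasDerivAt U (σ'⁻¹ • U') (σ t) := by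
  set g := Function.invFunOn σ I
  have hgt : g (σ t) = t := hmono.injOn.leftInvOn_invFunOn (mem_of_mem_nhds hI)
  have hσg : ∀ᶠ r in 𝓝 (σ t), σ (g r) = r :=
    mem_of_superset (image_mem_nhds_of_strictMonoOn hmono hcont hI)
      fun _ hr ↦ Function.invFunOn_eq hr
  have hg : HasDerivAt g σ'⁻¹ (σ t) :=
    .of_local_left_inverse (continuousAt_invFunOn_of_strictMonoOn hmono hcont hI)
      (by rwa [hgt]) hσ' hσg
  exact (hU.scomp_of_eq (σ t) hg hgt.symm).congr_of_eventuallyEq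
    (hσg.mono fun r hr ↦ (congrArg U hr).symm)

theorem fderiv_apply_eq_partial_derivs {𝕜 E : Type*} [NontriviallyNormedField 𝕜]
    [NormedAddCommGroup E] [NormedSpace 𝕜 E] {f : 𝕜 × 𝕜 → E} {x t : 𝕜}
    (hf : DifferentiableAt 𝕜 f (x, t)) (a b : 𝕜) :
    fderiv 𝕜 f (x, t) (a, b) =
      b • deriv (fun t' ↦ f (x, t')) t + a • deriv (fun x' ↦ f (x', t)) x := by
  have hx : deriv (fun x' ↦ f (x', t)) x = fderiv 𝕜 f (x, t) (1, 0) :=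
    (hf.hasFDerivAt.comp_hasDerivAt (f := fun x' ↦ (x', t)) x
      ((hasDerivAt_id x).prodMk (hasDerivAt_const x t))).deriv
  have ht : deriv (fun t' ↦ f (x, t')) t = fderiv 𝕜 f (x, t) (0, 1) :=
    (hf.hasFDerivAt.comp_hasDerivAt (f := fun t' ↦ (x, t')) t
      ((hasDerivAt_const t x).prodMk (hasDerivAt_id t))).deriv
  rw [hx, ht, ← map_smul, ← map_smul, ← map_add]
  simp

theorem fderiv_sub_comp_snd_apply {𝕜 E F : Type*} [NontriviallyNormedField 𝕜]
    [NormedAddCommGroup E] [NormedSpace 𝕜 E] [NormedAddCommGroup F] [NormedSpace 𝕜 F]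
    {f : E × 𝕜 → F} {κ : 𝕜 → F} {p : E × 𝕜} (hf : DifferentiableAt 𝕜 f p)
    (hκ : DifferentiableAt 𝕜 κ p.2) (v : E) (a : 𝕜) :
    fderiv 𝕜 (fun q ↦ f q - κ q.2) p (v, a) = fderiv 𝕜 f p (v, a) - a • deriv κ p.2 := by
  have hκsnd := hκ.hasDerivAt.hasFDerivAt.comp p hasFDerivAt_snd
  have hsub : fderiv 𝕜 (fun q ↦ f q - κ q.2) p = _ := (hf.hasFDerivAt.fun_sub hκsnd).fderiv
  simp [hsub]

end Calculus

/-- The point of space-time whose self-similar coordinates are `y` and `s = σ t`, that is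
`x = ξ t + y e^{-γ s}`, when space is centred at `ξ` and contracted at rate `γ` in the time `s`. -/
noncomputable def selfSimilarPoint (σ ξ : ℝ → ℝ) (γ y t : ℝ) : ℝ × ℝ :=
  (ξ t + y * Real.exp (-(γ * σ t)), t)

/-- `V` is the field `f` written in self-similar variables over the times in `I`, amplified by
`e^{α s}`. Only the values `V y s` with `s ∈ σ '' I` are prescribed. -/
def IsSelfSimilarProfile {E : Type*} [NormedAddCommGroup E] [NormedSpace ℝ E] (I : Set ℝ)
    (σ ξ : ℝ → ℝ) (α γ : ℝ) (f : ℝ × ℝ → E) (V : ℝ → ℝ → E) : Prop :=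
  ∀ y, ∀ t ∈ I, V y (σ t) = Real.exp (α * σ t) • f (selfSimilarPoint σ ξ γ y t)

/-- `τ` is an admissible blow-up time estimate on `I`: it stays ahead of the current time, and
`τ' < 1` makes the remaining time `τ t - t` decrease. -/
structure IsBlowupTimeOn (τ : ℝ → ℝ) (I : Set ℝ) : Prop where
  differentiableAt : ∀ t ∈ I, DifferentiableAt ℝ τ t
  lt : ∀ t ∈ I, t < τ t
  deriv_lt_one : ∀ t ∈ I, deriv τ t < 1

/-- The self-similar time `s(t) = -log (τ t - t)` attached to the blow-up time estimate `τ`. -/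
noncomputable def selfSimilarTime (τ : ℝ → ℝ) (t : ℝ) : ℝ :=
  -Real.log (τ t - t)

section SelfSimilarPoint

variable {σ ξ : ℝ → ℝ} {γ y t σ' ξ' : ℝ}

theorem hasDerivAt_selfSimilarPoint_space :
    HasDerivAt (fun y ↦ selfSimilarPoint σ ξ γ y t) (Real.exp (-(γ * σ t)), 0) y := by
  have hspace : HasDerivAt (fun y ↦ ξ t + y * Real.exp (-(γ * σ t))) (Real.exp (-(γ * σ t))) y :=
    (hasDerivAt_mul_const _).const_add (ξ t)
  exact hspace.prodMk (hasDerivAt_const y t)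

theorem hasDerivAt_selfSimilarPoint_time (hσ : HasDerivAt σ σ' t) (hξ : HasDerivAt ξ ξ' t) :
    HasDerivAt (selfSimilarPoint σ ξ γ y)
      (ξ' - γ * y * σ' * Real.exp (-(γ * σ t)), 1) t := by
  have hexp : HasDerivAt (fun t ↦ Real.exp (-(γ * σ t)))
      (Real.exp (-(γ * σ t)) * -(γ * σ')) t := (hσ.const_mul γ).fun_neg.exp
  exact ((hξ.add (hexp.const_mul y)).congr_deriv (by ring)).prodMk (hasDerivAt_id t)

end SelfSimilarPoint

namespace IsSelfSimilarProfile

variable {E : Type*} [NormedAddCommGroup E] [NormedSpace ℝ E] {I : Set ℝ} {σ ξ : ℝ → ℝ}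
  {α γ y t σ' ξ' c : ℝ} {f : ℝ × ℝ → E} {V : ℝ → ℝ → E} {F : E}

theorem hasDerivAt_space (hV : IsSelfSimilarProfile I σ ξ α γ f V) (ht : t ∈ I)
    (hf : DifferentiableAt ℝ f (selfSimilarPoint σ ξ γ y t)) :
    HasDerivAt (fun y ↦ V y (σ t))
      (Real.exp (α * σ t) • Real.exp (-(γ * σ t)) •
        fderiv ℝ f (selfSimilarPoint σ ξ γ y t) (1, 0)) y := by
  simp only [fun y ↦ hV y t ht]
  rw [← map_smul, Prod.smul_mk, smul_eq_mul, mul_one, smul_zero]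
  exact (hf.hasFDerivAt.comp_hasDerivAt y hasDerivAt_selfSimilarPoint_space).const_smul
    (Real.exp (α * σ t))

theorem hasDerivAt_time (hV : IsSelfSimilarProfile I σ ξ α γ f V) (hmono : StrictMonoOn σ I)
    (hcont : ContinuousOn σ I) (hI : I ∈ 𝓝 t) (hσ : HasDerivAt σ σ' t) (hσ' : σ' ≠ 0)
    (hξ : HasDerivAt ξ ξ' t) (hf : DifferentiableAt ℝ f (selfSimilarPoint σ ξ γ y t)) :
    HasDerivAt (V y) (σ'⁻¹ • (Real.exp (α * σ t) •
      (fderiv ℝ f (selfSimilarPoint σ ξ γ y t)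
        (ξ' - γ * y * σ' * Real.exp (-(γ * σ t)), 1) +
          (α * σ') • f (selfSimilarPoint σ ξ γ y t)))) (σ t) := by
  refine hasDerivAt_of_comp_strictMonoOn hmono hcont hI hσ hσ' ?_
  have hfield := hf.hasFDerivAt.comp_hasDerivAt t (hasDerivAt_selfSimilarPoint_time hσ hξ)
  have hproduct := (hσ.const_mul α).exp.smul hfield
  refine (hproduct.congr_deriv ?_).congr_of_eventuallyEq (mem_of_superset hI (hV y))
  rw [smul_add, smul_smul]
  rfl

theorem transport_of_hasDerivAt (hV : IsSelfSimilarProfile I σ ξ α γ f V)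
    (hmono : StrictMonoOn σ I) (hcont : ContinuousOn σ I) (hI : I ∈ 𝓝 t)
    (hσ : HasDerivAt σ σ' t) (hσ' : σ' ≠ 0) (hξ : HasDerivAt ξ ξ' t)
    (hf : DifferentiableAt ℝ f (selfSimilarPoint σ ξ γ y t))
    (hF : fderiv ℝ f (selfSimilarPoint σ ξ γ y t) (c, 1) = F) :
    deriv (V y) (σ t) - α • V y (σ t) +
        (γ * y + Real.exp (γ * σ t) * σ'⁻¹ * (c - ξ')) • deriv (fun y ↦ V y (σ t)) y =
      (Real.exp (α * σ t) * σ'⁻¹) • F := by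
  have hvelocity : (ξ' - γ * y * σ' * Real.exp (-(γ * σ t)), (1 : ℝ)) =
      (c, 1) + (ξ' - γ * y * σ' * Real.exp (-(γ * σ t)) - c) • (1, 0) := by simp
  rw [(hV.hasDerivAt_time hmono hcont hI hσ hσ' hξ hf).deriv,
    (hV.hasDerivAt_space (mem_of_mem_nhds hI) hf).deriv, hV y t (mem_of_mem_nhds hI),
    hvelocity, map_add, map_smul, hF, Real.exp_neg]
  match_scalars <;> field_simp <;> ring

end IsSelfSimilarProfile

section SelfSimilarTime

variable {I : Set ℝ} {τ : ℝ → ℝ} {t τ' : ℝ}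

theorem hasDerivAt_selfSimilarTime (hτ : HasDerivAt τ τ' t) (htτ : t < τ t) :
    HasDerivAt (selfSimilarTime τ) ((1 - τ') * Real.exp (selfSimilarTime τ t)) t := by
  have hpos : 0 < τ t - t := sub_pos.2 htτ
  refine (((hτ.sub (hasDerivAt_id t)).log hpos.ne').neg).congr_deriv ?_
  rw [selfSimilarTime, Real.exp_neg, Real.exp_log hpos, ← neg_sub τ' 1, neg_mul, div_eq_mul_inv]
  rfl

namespace IsBlowupTimeOn

theorem hasDerivAt (hτ : IsBlowupTimeOn τ I) (ht : t ∈ I) :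
    HasDerivAt (selfSimilarTime τ) ((1 - deriv τ t) * Real.exp (selfSimilarTime τ t)) t :=
  hasDerivAt_selfSimilarTime (hτ.differentiableAt t ht).hasDerivAt (hτ.lt t ht)

theorem continuousOn (hτ : IsBlowupTimeOn τ I) : ContinuousOn (selfSimilarTime τ) I :=
  fun _ ht ↦ (hτ.hasDerivAt ht).continuousAt.continuousWithinAt

theorem strictMonoOn (hτ : IsBlowupTimeOn τ I) (hI : I.OrdConnected) :
    StrictMonoOn (selfSimilarTime τ) I := by
  refine strictMonoOn_of_deriv_pos hI.convex hτ.continuousOn fun t ht ↦ ?_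
  rw [(hτ.hasDerivAt (interior_subset ht)).deriv]
  exact mul_pos (sub_pos.2 (hτ.deriv_lt_one t (interior_subset ht))) (Real.exp_pos _)

end IsBlowupTimeOn

end SelfSimilarTime

namespace IsSelfSimilarProfile

variable {I : Set ℝ} {τ ξ : ℝ → ℝ} {α γ x y t c : ℝ}

theorem transport {E : Type*} [NormedAddCommGroup E] [NormedSpace ℝ E] {f : ℝ × ℝ → E}
    {V : ℝ → ℝ → E} {F : E} (hV : IsSelfSimilarProfile I (selfSimilarTime τ) ξ α γ f V)
    (hI : I.OrdConnected) (hIt : I ∈ 𝓝 t) (hτ : IsBlowupTimeOn τ I) (hξ : DifferentiableAt ℝ ξ t)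
    (hf : DifferentiableAt ℝ f (selfSimilarPoint (selfSimilarTime τ) ξ γ y t))
    (hF : fderiv ℝ f (selfSimilarPoint (selfSimilarTime τ) ξ γ y t) (c, 1) = F) :
    deriv (V y) (selfSimilarTime τ t) - α • V y (selfSimilarTime τ t) +
        (γ * y + Real.exp ((γ - 1) * selfSimilarTime τ t) * (1 / (1 - deriv τ t)) *
          (c - deriv ξ t)) • deriv (fun y ↦ V y (selfSimilarTime τ t)) y =
      (Real.exp ((α - 1) * selfSimilarTime τ t) * (1 / (1 - deriv τ t))) • F := by
  have ht : t ∈ I := mem_of_mem_nhds hIt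
  have hσ' : (1 - deriv τ t) * Real.exp (selfSimilarTime τ t) ≠ 0 :=
    mul_ne_zero (sub_pos.2 (hτ.deriv_lt_one t ht)).ne' (Real.exp_ne_zero _)
  have hrescale (δ : ℝ) : Real.exp ((δ - 1) * selfSimilarTime τ t) * (1 / (1 - deriv τ t)) =
      Real.exp (δ * selfSimilarTime τ t) *
        ((1 - deriv τ t) * Real.exp (selfSimilarTime τ t))⁻¹ := by
    rw [sub_one_mul, Real.exp_sub, mul_inv]
    ring
  simpa only [hrescale] using hV.transport_of_hasDerivAt (hτ.strictMonoOn hI) hτ.continuousOn hIt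
    (hτ.hasDerivAt ht) hσ' hξ.hasDerivAt hf hF

variable {f : ℝ × ℝ → ℝ} {V : ℝ → ℝ → ℝ} {F : ℝ}

theorem transport_unscaled (hV : IsSelfSimilarProfile I (selfSimilarTime τ) ξ 0 (3 / 2) f V)
    (hI : I.OrdConnected) (hIt : I ∈ 𝓝 t) (hτ : IsBlowupTimeOn τ I) (hξ : DifferentiableAt ℝ ξ t)
    (hx : selfSimilarPoint (selfSimilarTime τ) ξ (3 / 2) y t = (x, t))
    (hf : DifferentiableAt ℝ f (x, t))
    (hF : deriv (fun t' ↦ f (x, t')) t + c * deriv (fun x' ↦ f (x', t)) x = F) :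
    deriv (V y) (selfSimilarTime τ t) +
        (3 / 2 * y + Real.exp (selfSimilarTime τ t / 2) * (1 / (1 - deriv τ t)) *
          (c - deriv ξ t)) * deriv (fun y ↦ V y (selfSimilarTime τ t)) y =
      Real.exp (-selfSimilarTime τ t) * (1 / (1 - deriv τ t)) * F := by
  have hchar : fderiv ℝ f (x, t) (c, 1) = F := by
    rw [fderiv_apply_eq_partial_derivs hf, one_smul, smul_eq_mul, hF]
  have h := hV.transport hI hIt hτ hξ (hx ▸ hf) (hx ▸ hchar)
  rwa [zero_smul, sub_zero, smul_eq_mul, smul_eq_mul, zero_sub, neg_one_mul,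
    show (3 / 2 - 1) * selfSimilarTime τ t = selfSimilarTime τ t / 2 by ring] at h

theorem transport_modulated {κ : ℝ → ℝ}
    (hV : IsSelfSimilarProfile I (selfSimilarTime τ) ξ (1 / 2) (3 / 2) (fun p ↦ f p - κ p.2) V)
    (hI : I.OrdConnected) (hIt : I ∈ 𝓝 t) (hτ : IsBlowupTimeOn τ I) (hξ : DifferentiableAt ℝ ξ t)
    (hκ : DifferentiableAt ℝ κ t)
    (hx : selfSimilarPoint (selfSimilarTime τ) ξ (3 / 2) y t = (x, t))
    (hf : DifferentiableAt ℝ f (x, t))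
    (hF : deriv (fun t' ↦ f (x, t')) t + c * deriv (fun x' ↦ f (x', t)) x = F) :
    deriv (V y) (selfSimilarTime τ t) - 1 / 2 * V y (selfSimilarTime τ t) +
        (3 / 2 * y + Real.exp (selfSimilarTime τ t / 2) * (1 / (1 - deriv τ t)) *
          (c - deriv ξ t)) * deriv (fun y ↦ V y (selfSimilarTime τ t)) y =
      Real.exp (-selfSimilarTime τ t / 2) * (1 / (1 - deriv τ t)) * (F - deriv κ t) := by
  have hdiff : DifferentiableAt ℝ (fun p ↦ f p - κ p.2) (x, t) :=
    hf.fun_sub (hκ.comp (x, t) differentiableAt_snd)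
  have hchar : fderiv ℝ (fun p ↦ f p - κ p.2) (x, t) (c, 1) = F - deriv κ t := by
    rw [fderiv_sub_comp_snd_apply hf hκ, fderiv_apply_eq_partial_derivs hf, one_smul, one_smul,
      smul_eq_mul, hF]
  have h := hV.transport hI hIt hτ hξ (hx ▸ hdiff) (hx ▸ hchar)
  rwa [smul_eq_mul, smul_eq_mul, smul_eq_mul,
    show (3 / 2 - 1) * selfSimilarTime τ t = selfSimilarTime τ t / 2 by ring,
    show (1 / 2 - 1) * selfSimilarTime τ t = -selfSimilarTime τ t / 2 by ring] at h

end IsSelfSimilarProfile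

/-- Passage to self-similar variables for the diagonalized shallow water system.
With `s(t) = −log(τ(t) − t)`, `y = (x − ξ(t)) e^{3s/2}`, and the ansatz
`w(x,t) = e^{−s/2} W(y,s) + κ(t)`, `z(x,t) = Z(y,s)`, `b'(x) = B(y,s)`,
the Riemann-invariant system transforms into the self-similar `(W, Z)` system. -/
theorem selfSimilar_transformation (βstar : ℝ) (b : ℝ → ℝ) (hb : Differentiable ℝ b)
    (I : Set ℝ) (hIopen : IsOpen I) (hIconn : I.OrdConnected)
    (w z : ℝ × ℝ → ℝ)
    (hwdiff : ∀ x : ℝ, ∀ t ∈ I, DifferentiableAt ℝ w (x, t))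
    (hzdiff : ∀ x : ℝ, ∀ t ∈ I, DifferentiableAt ℝ z (x, t))
    (hweq : ∀ x : ℝ, ∀ t ∈ I,
      deriv (fun t' => w (x, t')) t +
        (w (x, t) + (1 / 3) * z (x, t)) * deriv (fun x' => w (x', t)) x =
        -(3 / 4) * βstar * deriv b x)
    (hzeq : ∀ x : ℝ, ∀ t ∈ I,
      deriv (fun t' => z (x, t')) t +
        ((1 / 3) * w (x, t) + z (x, t)) * deriv (fun x' => z (x', t)) x =
        -(3 / 4) * βstar * deriv b x)
    (τ ξ κ : ℝ → ℝ)
    (hτdiff : ∀ t ∈ I, DifferentiableAt ℝ τ t)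
    (hξdiff : ∀ t ∈ I, DifferentiableAt ℝ ξ t)
    (hκdiff : ∀ t ∈ I, DifferentiableAt ℝ κ t)
    (hτgt : ∀ t ∈ I, t < τ t)
    (hτ' : ∀ t ∈ I, deriv τ t < 1)
    (W Z B : ℝ → ℝ → ℝ)
    (hW : ∀ y : ℝ, ∀ t ∈ I,
      W y (-Real.log (τ t - t)) =
        Real.exp (-Real.log (τ t - t) / 2) *
          (w (ξ t + y * Real.exp (-(3 * (-Real.log (τ t - t))) / 2), t) - κ t))
    (hZ : ∀ y : ℝ, ∀ t ∈ I,
      Z y (-Real.log (τ t - t)) =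
        z (ξ t + y * Real.exp (-(3 * (-Real.log (τ t - t))) / 2), t))
    (hB : ∀ y : ℝ, ∀ t ∈ I,
      B y (-Real.log (τ t - t)) =
        deriv b (ξ t + y * Real.exp (-(3 * (-Real.log (τ t - t))) / 2))) :
    -- `s(t) = −log(τ(t) − t)` is strictly increasing on `I`
    StrictMonoOn (fun t => -Real.log (τ t - t)) I ∧
    -- the self-similar equations for `W` and `Z`
    (∀ y : ℝ, ∀ t ∈ I,
      let s := -Real.log (τ t - t)
      let βτ := 1 / (1 - deriv τ t)
      let GW := Real.exp (s / 2) * βτ * (κ t + (1 / 3) * Z y s - deriv ξ t)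
      let GZ := Real.exp (s / 2) * βτ * ((1 / 3) * κ t + Z y s - deriv ξ t)
      (deriv (fun s' => W y s') s - (1 / 2) * W y s +
          ((3 / 2) * y + βτ * W y s + GW) * deriv (fun y' => W y' s) y =
          -(3 / 4) * βstar * βτ * Real.exp (-s / 2) * B y s -
            Real.exp (-s / 2) * βτ * deriv κ t) ∧
      (deriv (fun s' => Z y s') s +
          ((3 / 2) * y + (1 / 3) * βτ * W y s + GZ) * deriv (fun y' => Z y' s) y =
          -(3 / 4) * βstar * βτ * Real.exp (-s) * B y s)) := by
  have hτ : IsBlowupTimeOn τ I := ⟨hτdiff, hτgt, hτ'⟩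
  have hrate (s : ℝ) : -(3 * s) / 2 = -(3 / 2 * s) := by ring
  simp only [hrate] at hW hZ hB
  have hWprofile : IsSelfSimilarProfile I (selfSimilarTime τ) ξ (1 / 2) (3 / 2)
      (fun p ↦ w p - κ p.2) W := fun y t ht ↦ by
    rw [one_div_mul_eq_div]
    exact hW y t ht
  have hZprofile : IsSelfSimilarProfile I (selfSimilarTime τ) ξ 0 (3 / 2) z Z := fun y t ht ↦ by
    rw [zero_mul, Real.exp_zero, one_smul]
    exact hZ y t ht
  refine ⟨hτ.strictMonoOn hIconn, fun y t ht ↦ ?_⟩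
  intro s βτ GW GZ
  set x := ξ t + y * Real.exp (-(3 / 2 * s))
  have hWs : W y s = Real.exp (s / 2) * (w (x, t) - κ t) := hW y t ht
  have hZs : Z y s = z (x, t) := hZ y t ht
  have hBs : B y s = deriv b x := hB y t ht
  have hIt : I ∈ 𝓝 t := hIopen.mem_nhds ht
  have hWeq := hWprofile.transport_modulated (x := x) hIconn hIt hτ (hξdiff t ht) (hκdiff t ht)
    rfl (hwdiff x t ht) (hweq x t ht)
  have hZeq := hZprofile.transport_unscaled (x := x) hIconn hIt hτ (hξdiff t ht) rfl
    (hzdiff x t ht) (hzeq x t ht)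
  rw [show selfSimilarTime τ t = s from rfl] at hWeq hZeq
  simp only [GW, GZ, hZs, hBs]
  constructor
  · linear_combination hWeq + βτ * deriv (fun y' ↦ W y' s) y * hWs
  · linear_combination hZeq + 1 / 3 * βτ * deriv (fun y' ↦ Z y' s) y * hWs
end

section
/- Let 0 < ℓ ≤ e^{−3/2}, let s₀ ≤ s₁ be real numbers, and let Φ : [s₀, s₁] → ℝ be a function satisfying |Φ(s)| ≥ ℓ·e^{(s − s₀)/5} for all s ∈ [s₀, s₁]. Then ∫_{s₀}^{s₁} (1 + Φ(s)²)^{−1/3} ds ≤ 10·log(1/ℓ). -/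
/-!
The integrand `⟨Φ⟩^(-r)` is at most `1`, and at most `‖Φ‖^(-r)`, which decays exponentially in time
because `‖Φ‖` grows at least exponentially. The two bounds cross at the time `m` at which the lower
bound `ℓ * exp (c * (s - s₀))` for `‖Φ‖` reaches `1`, a time `log (1 / ℓ) / c` after the start. The
trivial bound is used before `m`, and after `m` the exponential tail contributes only the constant
`1 / (r * c)`; the condition `ℓ ≤ exp (-1 / r)` says that this constant is at most
`log (1 / ℓ) / c`.
-/

open MeasureTheory Set

theorem one_add_norm_sq_rpow_le_min {E : Type*} [SeminormedAddCommGroup E] {r b : ℝ} {x : E}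
    (hr : 0 ≤ r) (hb : 0 < b) (hx : b ≤ ‖x‖) :
    (1 + ‖x‖ ^ 2) ^ (-r / 2) ≤ min 1 (b ^ (-r)) := by
  have hexp : -r / 2 ≤ 0 := by linarith
  refine le_min (Real.rpow_le_one_of_one_le_of_nonpos ?_ hexp) ?_
  · linarith [sq_nonneg ‖x‖]
  · have hsq : b ^ 2 ≤ 1 + ‖x‖ ^ 2 := by
      linarith [pow_le_pow_left₀ hb.le hx 2]
    calc (1 + ‖x‖ ^ 2) ^ (-r / 2) ≤ (b ^ 2) ^ (-r / 2) :=
          Real.rpow_le_rpow_of_nonpos (by positivity) hsq hexp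
      _ = b ^ (-r) := by
          rw [← Real.rpow_natCast_mul hb.le, Nat.cast_ofNat, mul_div_cancel₀ (-r) two_ne_zero]

theorem mul_exp_rpow_neg_eq_exp {ℓ c : ℝ} (hℓ : 0 < ℓ) (hc : c ≠ 0) (r t₀ t : ℝ) :
    (ℓ * Real.exp (c * (t - t₀))) ^ (-r) =
      Real.exp (-(r * c) * (t - (t₀ + Real.log (1 / ℓ) / c))) := by
  rw [Real.rpow_def_of_pos (by positivity), Real.log_mul hℓ.ne' (Real.exp_ne_zero _),
    Real.log_exp, one_div, Real.log_inv]
  congr 1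
  field_simp
  ring

section ExpTail

variable {a : ℝ}

theorem integrableOn_exp_neg_mul_sub_Ioi (ha : 0 < a) (m t₀ : ℝ) :
    IntegrableOn (fun t ↦ Real.exp (-a * (t - m))) (Ioi t₀) := by
  simp only [mul_sub, Real.exp_sub]
  exact (integrableOn_exp_mul_Ioi (neg_lt_zero.mpr ha) t₀).div_const (Real.exp (-a * m))

theorem integral_exp_neg_mul_sub_Ioi (ha : 0 < a) (m : ℝ) :
    ∫ t in Ioi m, Real.exp (-a * (t - m)) = 1 / a := by
  simp only [mul_sub, Real.exp_sub]
  rw [integral_div, integral_exp_mul_Ioi (neg_lt_zero.mpr ha)]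
  field_simp

theorem integrableOn_min_one_exp_Ioi (ha : 0 < a) (m t₀ : ℝ) :
    IntegrableOn (fun t ↦ min 1 (Real.exp (-a * (t - m)))) (Ioi t₀) := by
  refine (integrableOn_exp_neg_mul_sub_Ioi ha m t₀).mono' (by fun_prop) (ae_of_all _ fun t ↦ ?_)
  rw [Real.norm_of_nonneg (by positivity)]
  exact min_le_right _ _

theorem integral_min_one_exp_Ioi {m t₀ : ℝ} (ha : 0 < a) (hm : t₀ ≤ m) :
    ∫ t in Ioi t₀, min 1 (Real.exp (-a * (t - m))) = m - t₀ + 1 / a := by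
  have before : ∫ t in t₀..m, min 1 (Real.exp (-a * (t - m))) = m - t₀ := by
    have heq : EqOn (fun t ↦ min 1 (Real.exp (-a * (t - m)))) (fun _ ↦ 1) (uIcc t₀ m) := by
      intro t ht
      rw [uIcc_of_le hm] at ht
      exact min_eq_left (Real.one_le_exp (by nlinarith [ht.2]))
    rw [intervalIntegral.integral_congr heq, integral_one]
  have after : ∫ t in Ioi m, min 1 (Real.exp (-a * (t - m))) = 1 / a := by
    rw [← integral_exp_neg_mul_sub_Ioi ha m]
    refine setIntegral_congr_fun measurableSet_Ioi fun t (ht : m < t) ↦ ?_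
    exact min_eq_right (Real.exp_le_one_iff.mpr (by nlinarith))
  rw [← intervalIntegral.integral_interval_add_Ioi (integrableOn_min_one_exp_Ioi ha m t₀)
    (integrableOn_min_one_exp_Ioi ha m m), before, after]

theorem intervalIntegral_le_of_le_min_one_exp {f : ℝ → ℝ} {m t₀ t₁ : ℝ} (ha : 0 < a)
    (hm : t₀ ≤ m) (ht : t₀ ≤ t₁) (hf₀ : ∀ t ∈ Ioc t₀ t₁, 0 ≤ f t)
    (hf : ∀ t ∈ Ioc t₀ t₁, f t ≤ min 1 (Real.exp (-a * (t - m)))) :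
    ∫ t in t₀..t₁, f t ≤ m - t₀ + 1 / a := by
  have hint := integrableOn_min_one_exp_Ioi ha m t₀
  rw [intervalIntegral.integral_of_le ht]
  calc ∫ t in Ioc t₀ t₁, f t
      -- This comparison also covers a non-integrable `f`, whose integral is `0` by convention.
      ≤ ∫ t in Ioc t₀ t₁, min 1 (Real.exp (-a * (t - m))) :=
        integral_mono_of_nonneg (ae_restrict_of_forall_mem measurableSet_Ioc hf₀)
          (hint.mono_set Ioc_subset_Ioi_self) (ae_restrict_of_forall_mem measurableSet_Ioc hf)
    _ ≤ ∫ t in Ioi t₀, min 1 (Real.exp (-a * (t - m))) :=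
        setIntegral_mono_set hint (ae_of_all _ fun t ↦ by positivity)
          Ioc_subset_Ioi_self.eventuallyLE
    _ = m - t₀ + 1 / a := integral_min_one_exp_Ioi ha hm

end ExpTail

section Trajectory

variable {E : Type*} [SeminormedAddCommGroup E] {ℓ c r s₀ s₁ : ℝ} {Φ : ℝ → E}

theorem integral_one_add_norm_sq_rpow_le (hℓpos : 0 < ℓ) (hℓ : ℓ ≤ 1) (hc : 0 < c) (hr : 0 < r)
    (hs : s₀ ≤ s₁) (hΦ : ∀ s ∈ Ioc s₀ s₁, ℓ * Real.exp (c * (s - s₀)) ≤ ‖Φ s‖) :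
    ∫ s in s₀..s₁, (1 + ‖Φ s‖ ^ 2) ^ (-r / 2) ≤ Real.log (1 / ℓ) / c + 1 / (r * c) := by
  have hlog : 0 ≤ Real.log (1 / ℓ) := Real.log_nonneg (one_le_one_div hℓpos hℓ)
  have hcross : s₀ ≤ s₀ + Real.log (1 / ℓ) / c := le_add_of_nonneg_right (by positivity)
  have hbound := intervalIntegral_le_of_le_min_one_exp (f := fun s ↦ (1 + ‖Φ s‖ ^ 2) ^ (-r / 2))
    (mul_pos hr hc) hcross hs (fun s _ ↦ by positivity) fun s hs' ↦ by
      rw [← mul_exp_rpow_neg_eq_exp hℓpos hc.ne']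
      exact one_add_norm_sq_rpow_le_min hr.le (by positivity) (hΦ s hs')
  rwa [add_sub_cancel_left] at hbound

theorem trajectory_integral_bound_general (hℓpos : 0 < ℓ) (hℓ : ℓ ≤ Real.exp (-(1 / r)))
    (hc : 0 < c) (hr : 0 < r) (hs : s₀ ≤ s₁)
    (hΦ : ∀ s ∈ Ioc s₀ s₁, ℓ * Real.exp (c * (s - s₀)) ≤ ‖Φ s‖) :
    ∫ s in s₀..s₁, (1 + ‖Φ s‖ ^ 2) ^ (-r / 2) ≤ 2 / c * Real.log (1 / ℓ) := by
  have hℓ_le_one : ℓ ≤ 1 := hℓ.trans (Real.exp_le_one_iff.mpr (by simp [hr.le]))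
  have hlog : 1 / r ≤ Real.log (1 / ℓ) := by
    rw [one_div ℓ, Real.log_inv]
    exact le_neg_of_le_neg ((Real.log_le_iff_le_exp hℓpos).mpr hℓ)
  calc ∫ s in s₀..s₁, (1 + ‖Φ s‖ ^ 2) ^ (-r / 2)
      ≤ Real.log (1 / ℓ) / c + 1 / r / c := by
        rw [div_div]
        exact integral_one_add_norm_sq_rpow_le hℓpos hℓ_le_one hc hr hs hΦ
    _ ≤ Real.log (1 / ℓ) / c + Real.log (1 / ℓ) / c := by gcongr
    _ = 2 / c * Real.log (1 / ℓ) := by ring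

end Trajectory

/-- Integral bound along a receding trajectory (second part of Lemma 7.2 abstracted):
if `0 < ℓ ≤ e^{−3/2}` and `|Φ(s)| ≥ ℓ e^{(s − s₀)/5}` on `[s₀, s₁]`, then
`∫_{s₀}^{s₁} ⟨Φ(s)⟩^{−2/3} ds ≤ 10 log(1/ℓ)`. -/
theorem trajectory_integral_bound (ℓ s₀ s₁ : ℝ) (hℓpos : 0 < ℓ)
    (hℓ : ℓ ≤ Real.exp (-(3 : ℝ) / 2)) (hs : s₀ ≤ s₁) (Φ : ℝ → ℝ)
    (hΦ : ∀ s ∈ Set.Icc s₀ s₁, ℓ * Real.exp ((s - s₀) / 5) ≤ |Φ s|) :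
    ∫ s in s₀..s₁, (1 + Φ s ^ 2) ^ (-(1 : ℝ) / 3) ≤ 10 * Real.log (1 / ℓ) := by
  have hrate : ∀ s ∈ Ioc s₀ s₁, ℓ * Real.exp (1 / 5 * (s - s₀)) ≤ ‖Φ s‖ := fun s hs' ↦ by
    simpa only [one_div_mul_eq_div, Real.norm_eq_abs] using hΦ s (Ioc_subset_Icc_self hs')
  rw [show -(3 : ℝ) / 2 = -(1 / (2 / 3)) by norm_num] at hℓ
  rw [show -(1 : ℝ) / 3 = -(2 / 3) / 2 by norm_num, show (10 : ℝ) = 2 / (1 / 5) by norm_num]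
  simpa only [Real.norm_eq_abs, sq_abs] using
    trajectory_integral_bound_general hℓpos hℓ (by norm_num) (by norm_num) hs hrate
end
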